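/- Let Θ ⊆ ℝ^d be convex with sup-norm diameter at most D, let f₁, …, f_n : ℝ^d → ℝ be convex and differentiable with ∇f_i(θ) ≠ 0 and ‖∇f_i(θ)‖_∞ ≤ G for all i and all θ ∈ Θ, and let θ₁ ∈ Θ. Run adaptive-probabilities SGD with step sizes α_t = 1/√t and optimal probabilities: given the history (i₁,…,i_{t−1}) and the resulting θ_t ∈ Θ, set p̂_t(i) = ‖∇f_i(θ_t)‖₂ / Σ_j ‖∇f_j(θ_t)‖₂, ŵ_i = 1/(n p̂_t(i)), and let θ_{t+1}(i₁,…,i_t) ∈ Θ be a Euclidean projection of θ_t − α_t ŵ_{i_t} ∇f_{i_t}(θ_t) onto Θ. With trajectory probabilities P(i₁,…,i_t) = Π_{τ≤t} p̂_τ(i_τ) and E the corresponding expectation, for every θ* ∈ Θ and f = (1/n) Σ_i f_i: Σ_{t=1}^T E[ f(θ_t) − f(θ*) ] ≤ d G² (√T − 1/2) − Σ_{t=1}^T (1/(2√t)) E[ Var_n( ‖∇f_i(θ_t)‖₂ ) ] + (d D²/2) √T. -/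

import Mathlib

/-- Probability of the partial trajectory `s = (i₁, …, i_t)` under the history-dependent
sampling distributions `p`: `P(i₁,…,i_t) = Π_{τ=1}^t p_τ(i_τ; i₁,…,i_{τ−1})`. -/
def trajProb {n : ℕ} (p : (t : ℕ) → (Fin t → Fin n) → Fin n → ℝ) :
    (t : ℕ) → (Fin t → Fin n) → ℝ
  | 0, _ => 1
  | t + 1, s => trajProb p t (Fin.init s) * p t (Fin.init s) (s (Fin.last t))

/-!
The projection onto a convex set does not increase distances to the points of that set, so one step
with step size `α` and direction `ŵ_i ∇f_i`, drawn with probability `p̂_i`, changes the expected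
squared distance to `θ*` by at most `-2α ⟪∇f, θ - θ*⟫ + α² Σ_i p̂_i ‖ŵ_i ∇f_i‖²`: the importance
weights make the direction unbiased. For `p̂_i ∝ ‖∇f_i‖` the last sum is the square of the mean
gradient norm, that is, the mean square minus the variance. Convexity bounds the regret by
`⟪∇f, θ - θ*⟫`; since `1/α` increases, summation by parts bounds the accumulated changes of the
squared distance by `D² / (2 α_T)`.
-/

open scoped Gradient RealInnerProductSpace

section InnerProductSpace

variable {E : Type*} [NormedAddCommGroup E] [InnerProductSpace ℝ E]

lemma sub_le_inner_gradient_of_convexOn [CompleteSpace E] {K : Set E} {f : E → ℝ}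
    (hf : ConvexOn ℝ K f) {x y : E} (hx : x ∈ K) (hy : y ∈ K) (hfx : DifferentiableAt ℝ f x) :
    f x - f y ≤ ⟪∇ f x, x - y⟫ := by
  set L : ℝ →ᵃ[ℝ] E := AffineMap.lineMap x y
  have hconv : ConvexOn ℝ (L ⁻¹' K) (f ∘ L) := hf.comp_affineMap L
  have hderiv : HasDerivAt (f ∘ L) (fderiv ℝ f x (y - x)) 0 := by
    have hfL : HasFDerivAt f (fderiv ℝ f x) (L 0) := by simpa [L] using hfx.hasFDerivAt
    exact hfL.comp_hasDerivAt 0 AffineMap.hasDerivAt_lineMap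
  have hslope := hconv.le_slope_of_hasDerivAt (by simpa [L] using hx) (by simpa [L] using hy)
    one_pos hderiv
  have hle : fderiv ℝ f x (y - x) ≤ f y - f x := by simpa [slope_def_field, L] using hslope
  rw [inner_gradient_left, ← neg_sub y x, map_neg]
  linarith

lemma norm_sub_le_of_isMinOn_norm_sub {K : Set E} (hK : Convex ℝ K) {y z v : E} (hy : y ∈ K)
    (hv : v ∈ K) (hmin : IsMinOn (fun u => ‖u - z‖) K y) : ‖y - v‖ ≤ ‖z - v‖ := by
  have hinf : ‖z - y‖ = ⨅ w : K, ‖z - w‖ := by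
    simpa only [norm_sub_rev z] using (hmin.iInf_eq hy).symm
  have hobtuse : ⟪z - y, v - y⟫ ≤ 0 :=
    (norm_eq_iInf_iff_real_inner_le_zero hK hy).1 hinf v hv
  refine le_of_sq_le_sq ?_ (norm_nonneg _)
  have hexpand := norm_sub_sq_real (z - y) (v - y)
  rw [sub_sub_sub_cancel_right] at hexpand
  rw [norm_sub_rev y v]
  linarith [sq_nonneg ‖z - y‖]

lemma sum_mul_sq_norm_sub_le_of_isMinOn {ι : Type*} [Fintype ι] {K : Set E} (hK : Convex ℝ K)
    {x v : E} (hv : v ∈ K) {p : ι → ℝ} (hp : ∀ i, 0 ≤ p i) (hp_sum : ∑ i, p i = 1) {γ y : ι → E}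
    (hy : ∀ i, y i ∈ K) (hmin : ∀ i, IsMinOn (fun u => ‖u - (x - γ i)‖) K (y i)) :
    ∑ i, p i * ‖y i - v‖ ^ 2 ≤
      ‖x - v‖ ^ 2 - 2 * ⟪∑ i, p i • γ i, x - v⟫ + ∑ i, p i * ‖γ i‖ ^ 2 := by
  calc ∑ i, p i * ‖y i - v‖ ^ 2
      ≤ ∑ i, p i * ‖(x - γ i) - v‖ ^ 2 := by
        gcongr with i
        · exact hp i
        · exact norm_sub_le_of_isMinOn_norm_sub hK (hy i) hv (hmin i)
    _ = ∑ i, (p i * ‖x - v‖ ^ 2 - 2 * (p i * ⟪γ i, x - v⟫) + p i * ‖γ i‖ ^ 2) := by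
        refine Finset.sum_congr rfl fun i _ => ?_
        rw [sub_right_comm, norm_sub_sq_real, real_inner_comm]
        ring
    _ = ‖x - v‖ ^ 2 - 2 * ⟪∑ i, p i • γ i, x - v⟫ + ∑ i, p i * ‖γ i‖ ^ 2 := by
        simp only [Finset.sum_add_distrib, Finset.sum_sub_distrib, ← Finset.sum_mul,
          ← Finset.mul_sum, hp_sum, one_mul, sum_inner, real_inner_smul_left]

lemma euclideanSpace_norm_le_sqrt_card_mul {ι : Type*} [Fintype ι] {x : EuclideanSpace ℝ ι} {B : ℝ}
    (hx : ∀ i, |x i| ≤ B) : ‖x‖ ≤ √(Fintype.card ι) * |B| := by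
  rw [EuclideanSpace.norm_eq, ← Real.sqrt_sq_eq_abs, ← Real.sqrt_mul (Nat.cast_nonneg _)]
  refine Real.sqrt_le_sqrt ?_
  calc ∑ i, ‖x i‖ ^ 2 ≤ ∑ _i : ι, B ^ 2 := by gcongr with i; exact hx i
    _ = Fintype.card ι * B ^ 2 := by simp

end InnerProductSpace

section Mean

variable {n : ℕ}

/-- The uniform mean `(1/n) Σ_i x_i`, equal to `0` for `n = 0`. -/
noncomputable def unifMean (x : Fin n → ℝ) : ℝ := (1 / (n : ℝ)) * ∑ i, x i

/-- The uniform variance `Var_n(x_i)`, normalized by `1/n`. -/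
noncomputable def unifVar (x : Fin n → ℝ) : ℝ := unifMean fun i => (x i - unifMean x) ^ 2

lemma unifMean_mono {x y : Fin n → ℝ} (hxy : ∀ i, x i ≤ y i) : unifMean x ≤ unifMean y := by
  unfold unifMean
  gcongr with i
  exact hxy i

lemma unifMean_sub (x y : Fin n → ℝ) :
    unifMean (fun i => x i - y i) = unifMean x - unifMean y := by
  simp only [unifMean, Finset.sum_sub_distrib, mul_sub]

lemma unifVar_eq (x : Fin n → ℝ) :
    unifVar x = unifMean (fun i => x i ^ 2) - unifMean x ^ 2 := by
  obtain rfl | hn := eq_or_ne n 0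
  · simp [unifVar, unifMean]
  have hsum (m : ℝ) : ∑ i, (x i - m) ^ 2 = ∑ i, x i ^ 2 - 2 * m * ∑ i, x i + n * m ^ 2 := by
    simp [sub_sq, Finset.sum_add_distrib, Finset.mul_sum, mul_right_comm]
  rw [unifVar, unifMean, hsum]
  simp only [unifMean]
  field_simp
  ring

lemma sq_unifMean_le {x : Fin n → ℝ} {B : ℝ} (hx : ∀ i, |x i| ≤ B) :
    unifMean x ^ 2 ≤ B ^ 2 - unifVar x := by
  have hsq : unifMean (fun i => x i ^ 2) ≤ unifMean fun _ : Fin n => B ^ 2 :=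
    unifMean_mono fun i => sq_le_sq' (abs_le.1 (hx i)).1 (abs_le.1 (hx i)).2
  have hconst : unifMean (fun _ : Fin n => B ^ 2) ≤ B ^ 2 := by
    obtain rfl | hn := eq_or_ne n 0
    · simpa [unifMean] using sq_nonneg B
    · simp [unifMean, hn]
  linarith [unifVar_eq x]

end Mean

section NormSampling

variable {E : Type*} [NormedAddCommGroup E] {n : ℕ}

/-- The sampling probabilities proportional to the norms of the vectors `g i`. -/
noncomputable def normProb (g : Fin n → E) (i : Fin n) : ℝ := ‖g i‖ / ∑ j, ‖g j‖

lemma normProb_nonneg (g : Fin n → E) (i : Fin n) : 0 ≤ normProb g i := by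
  unfold normProb
  positivity

lemma sum_norm_ne_zero {g : Fin n → E} {i : Fin n} (hi : g i ≠ 0) : ∑ j, ‖g j‖ ≠ 0 :=
  (Finset.sum_pos' (fun _ _ => norm_nonneg _) ⟨i, Finset.mem_univ i, norm_pos_iff.2 hi⟩).ne'

lemma sum_normProb {g : Fin n → E} (hg : ∃ i, g i ≠ 0) : ∑ i, normProb g i = 1 := by
  obtain ⟨i, hi⟩ := hg
  simp only [normProb, ← Finset.sum_div]
  exact div_self (sum_norm_ne_zero hi)

-- If `g i = 0` the weight is the junk value `1 / 0`, but then `i` is drawn with probability `0`.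
lemma normProb_smul_weight_smul [NormedSpace ℝ E] (g : Fin n → E) (i : Fin n) :
    normProb g i • (1 / (n * normProb g i)) • g i = (1 / (n : ℝ)) • g i := by
  by_cases hi : g i = 0
  · simp [hi]
  have hp : normProb g i ≠ 0 := div_ne_zero (norm_ne_zero_iff.2 hi) (sum_norm_ne_zero hi)
  rw [smul_smul]
  congr 1
  field_simp

lemma sum_normProb_mul_sq_norm_weight_smul [NormedSpace ℝ E] (g : Fin n → E) :
    ∑ i, normProb g i * ‖(1 / (n * normProb g i)) • g i‖ ^ 2 = unifMean (fun i => ‖g i‖) ^ 2 := by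
  have hterm (i : Fin n) : normProb g i * ‖(1 / (n * normProb g i)) • g i‖ ^ 2 =
      (1 / (n : ℝ)) ^ 2 * (∑ j, ‖g j‖) * ‖g i‖ := by
    by_cases hi : g i = 0
    · simp [hi]
    have hnorm := norm_ne_zero_iff.2 hi
    have hsum := sum_norm_ne_zero hi
    rw [norm_smul, mul_pow, Real.norm_eq_abs, sq_abs, normProb]
    field_simp
  rw [Finset.sum_congr rfl fun i _ => hterm i, ← Finset.mul_sum, unifMean]
  ring

variable [InnerProductSpace ℝ E]

lemma sum_normProb_mul_sq_norm_sub_le {K : Set E} (hK : Convex ℝ K) {x v : E} (hv : v ∈ K)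
    {g y : Fin n → E} (hg : ∃ i, g i ≠ 0) (α : ℝ) (hy : ∀ i, y i ∈ K)
    (hmin : ∀ i, IsMinOn (fun u => ‖u - (x - (α * (1 / (n * normProb g i))) • g i)‖) K (y i)) :
    ∑ i, normProb g i * ‖y i - v‖ ^ 2 ≤ ‖x - v‖ ^ 2 -
      2 * α * unifMean (fun i => ⟪g i, x - v⟫) + α ^ 2 * unifMean (fun i => ‖g i‖) ^ 2 := by
  have hstep := sum_mul_sq_norm_sub_le_of_isMinOn hK hv (normProb_nonneg g) (sum_normProb hg) hy
    hmin
  have hmean : ⟪∑ i, normProb g i • (α * (1 / (n * normProb g i))) • g i, x - v⟫ =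
      α * unifMean (fun i => ⟪g i, x - v⟫) := by
    simp only [mul_smul, smul_comm _ α, normProb_smul_weight_smul, ← Finset.smul_sum,
      real_inner_smul_left, sum_inner, unifMean]
  have hsecond : ∑ i, normProb g i * ‖(α * (1 / (n * normProb g i))) • g i‖ ^ 2 =
      α ^ 2 * unifMean (fun i => ‖g i‖) ^ 2 := by
    simp only [← sum_normProb_mul_sq_norm_weight_smul, Finset.mul_sum, mul_smul, norm_smul α,
      mul_pow, Real.norm_eq_abs, sq_abs, mul_left_comm]
  rw [hmean, hsecond] at hstep
  linarith

lemma unifMean_sub_unifMean_le_of_normProb_step [CompleteSpace E] {K : Set E}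
    {f : Fin n → E → ℝ} (hf : ∀ i, ConvexOn ℝ K (f i)) {x v : E} (hx : x ∈ K) (hv : v ∈ K)
    (hdiff : ∀ i, DifferentiableAt ℝ (f i) x) (hgrad : ∃ i, ∇ (f i) x ≠ 0)
    {α : ℝ} (hα : 0 < α) {y : Fin n → E} (hy : ∀ i, y i ∈ K)
    (hmin : ∀ i, IsMinOn (fun u => ‖u - (x -
      (α * (1 / (n * normProb (fun j => ∇ (f j) x) i))) • ∇ (f i) x)‖) K (y i)) :
    unifMean (fun i => f i x) - unifMean (fun i => f i v) ≤
      1 / (2 * α) * (‖x - v‖ ^ 2 - ∑ i, normProb (fun j => ∇ (f j) x) i * ‖y i - v‖ ^ 2) +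
        α / 2 * unifMean (fun i => ‖∇ (f i) x‖) ^ 2 := by
  have hK : Convex ℝ K := (hf hgrad.choose).1
  have hstep := sum_normProb_mul_sq_norm_sub_le hK hv hgrad α hy hmin
  have hconv : unifMean (fun i => f i x) - unifMean (fun i => f i v) ≤
      unifMean fun i => ⟪∇ (f i) x, x - v⟫ := by
    rw [← unifMean_sub]
    exact unifMean_mono fun i => sub_le_inner_gradient_of_convexOn (hf i) hx hv (hdiff i)
  refine hconv.trans ?_
  have hscaled := mul_le_mul_of_nonneg_left hstep (by positivity : 0 ≤ 1 / (2 * α))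
  have hcancel (X I M : ℝ) :
      1 / (2 * α) * (X - 2 * α * I + α ^ 2 * M) = 1 / (2 * α) * X - I + α / 2 * M := by
    field_simp
  rw [hcancel] at hscaled
  linarith

end NormSampling

section TrajectoryExpectation

variable {n : ℕ} {p : (t : ℕ) → (Fin t → Fin n) → Fin n → ℝ} {k : ℕ}

/-- The expectation of a function of the history of length `k`, when each index is drawn from `p`
conditionally on the previous ones. -/
def trajExp (p : (t : ℕ) → (Fin t → Fin n) → Fin n → ℝ) (k : ℕ) (F : (Fin k → Fin n) → ℝ) : ℝ :=
  ∑ s, trajProb p k s * F s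

lemma trajExp_add (F H : (Fin k → Fin n) → ℝ) :
    trajExp p k (fun s => F s + H s) = trajExp p k F + trajExp p k H :=
  dotProduct_add (trajProb p k) F H

lemma trajExp_sub (F H : (Fin k → Fin n) → ℝ) :
    trajExp p k (fun s => F s - H s) = trajExp p k F - trajExp p k H :=
  dotProduct_sub (trajProb p k) F H

lemma trajExp_const_mul (c : ℝ) (F : (Fin k → Fin n) → ℝ) :
    trajExp p k (fun s => c * F s) = c * trajExp p k F :=
  dotProduct_smul c (trajProb p k) F

lemma trajExp_succ (F : (Fin (k + 1) → Fin n) → ℝ) :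
    trajExp p (k + 1) F = trajExp p k fun s => ∑ i, p k s i * F (Fin.snoc s i) := by
  have hsnoc (i : Fin n) (s : Fin k → Fin n) :
      Fin.snocEquiv (fun _ => Fin n) (i, s) = (Fin.snoc s i : Fin (k + 1) → Fin n) := rfl
  simp only [trajExp, ← (Fin.snocEquiv fun _ => Fin n).sum_comp, Fintype.sum_prod_type_right,
    hsnoc, trajProb, Fin.init_snoc, Fin.snoc_last, mul_assoc, Finset.mul_sum]

lemma trajExp_const (hp : ∀ t s, ∑ i, p t s i = 1) (c : ℝ) : trajExp p k (fun _ => c) = c := by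
  induction k with
  | zero => simp [trajExp, trajProb]
  | succ k ih => simpa only [trajExp_succ, ← Finset.sum_mul, hp, one_mul] using ih

lemma trajProb_nonneg (hp : ∀ t s i, 0 ≤ p t s i) : ∀ k s, 0 ≤ trajProb p k s
  | 0, _ => zero_le_one
  | k + 1, _ => mul_nonneg (trajProb_nonneg hp k _) (hp _ _ _)

lemma trajExp_mono (hp : ∀ t s i, 0 ≤ p t s i) {F H : (Fin k → Fin n) → ℝ}
    (hFH : ∀ s, F s ≤ H s) : trajExp p k F ≤ trajExp p k H :=
  dotProduct_le_dotProduct_of_nonneg_left hFH (trajProb_nonneg hp k)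

end TrajectoryExpectation

section RealSums

lemma sum_range_succ_mul_sub_succ_le {r a : ℕ → ℝ} (hr : Monotone r) (hr₀ : 0 ≤ r 0) {B : ℝ}
    (ha : ∀ k, a k ≤ B) (m : ℕ) :
    ∑ k ∈ Finset.range (m + 1), r k * (a k - a (k + 1)) ≤ r m * (B - a (m + 1)) := by
  induction m with
  | zero => simpa using mul_le_mul_of_nonneg_left (sub_le_sub_right (ha 0) (a 1)) hr₀
  | succ m ih =>
    rw [Finset.sum_range_succ]
    have hmono := mul_le_mul_of_nonneg_right (hr m.le_succ) (sub_nonneg.2 (ha (m + 1)))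
    linarith

lemma one_div_two_mul_sqrt_add_one_le {x : ℝ} (hx : 0 ≤ x) :
    1 / (2 * √(x + 1)) ≤ √(x + 1) - √x := by
  rw [div_le_iff₀ (by positivity)]
  nlinarith [sq_nonneg (√(x + 1) - √x), Real.sq_sqrt hx,
    Real.sq_sqrt (by positivity : 0 ≤ x + 1)]

lemma sum_range_one_div_two_mul_sqrt_le {T : ℕ} (hT : 1 ≤ T) :
    ∑ k ∈ Finset.range T, 1 / (2 * √((k : ℝ) + 1)) ≤ √T - 1 / 2 := by
  induction T, hT using Nat.le_induction with
  | base => norm_num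
  | succ m _ ih =>
    rw [Finset.sum_range_succ]
    push_cast
    linarith [one_div_two_mul_sqrt_add_one_le (Nat.cast_nonneg (α := ℝ) m)]

end RealSums

section AdaptiveSGD

variable {E : Type*} [NormedAddCommGroup E] [InnerProductSpace ℝ E] [CompleteSpace E] {n : ℕ}

/-- `θ` and `p` are the iterates and sampling probabilities of a run of adaptive-probabilities SGD
on `f` over `Θ` with step sizes `α`, both indexed by the history of drawn indices: the probabilities
are proportional to the gradient norms and the importance weight of `i` is `1 / (n p_i)`.
The paper's `θ_t` and `α_t` are `θ (t - 1)` and `α (t - 1)`. -/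
structure IsAdaptiveSGD (Θ : Set E) (f : Fin n → E → ℝ) (α : ℕ → ℝ)
    (θ : (t : ℕ) → (Fin t → Fin n) → E) (p : (t : ℕ) → (Fin t → Fin n) → Fin n → ℝ) : Prop where
  mem : ∀ t s, θ t s ∈ Θ
  prob_eq : ∀ t s, p t s = normProb fun i => ∇ (f i) (θ t s)
  isMinOn : ∀ (t : ℕ) (s : Fin t → Fin n) (i : Fin n),
    IsMinOn (fun u => ‖u - (θ t s - (α t * (1 / (n * p t s i))) • ∇ (f i) (θ t s))‖) Θ
      (θ (t + 1) (Fin.snoc s i))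

namespace IsAdaptiveSGD

variable {Θ : Set E} {f : Fin n → E → ℝ} {α : ℕ → ℝ} {θ : (t : ℕ) → (Fin t → Fin n) → E}
  {p : (t : ℕ) → (Fin t → Fin n) → Fin n → ℝ}

lemma prob_nonneg (h : IsAdaptiveSGD Θ f α θ p) (t : ℕ) (s : Fin t → Fin n) (i : Fin n) :
    0 ≤ p t s i := by
  rw [h.prob_eq]
  exact normProb_nonneg _ i

lemma sum_prob (h : IsAdaptiveSGD Θ f α θ p) (hgrad : ∀ x ∈ Θ, ∃ i, ∇ (f i) x ≠ 0) (t : ℕ)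
    (s : Fin t → Fin n) : ∑ i, p t s i = 1 := by
  rw [h.prob_eq]
  exact sum_normProb (hgrad _ (h.mem t s))

lemma trajExp_regret_le (h : IsAdaptiveSGD Θ f α θ p) (hf : ∀ i, ConvexOn ℝ Θ (f i))
    (hdiff : ∀ i, ∀ x ∈ Θ, DifferentiableAt ℝ (f i) x) (hgrad : ∀ x ∈ Θ, ∃ i, ∇ (f i) x ≠ 0)
    (k : ℕ) (hα : 0 < α k) {v : E} (hv : v ∈ Θ) :
    trajExp p k (fun s => unifMean (fun i => f i (θ k s)) - unifMean fun i => f i v) ≤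
      1 / (2 * α k) * (trajExp p k (fun s => ‖θ k s - v‖ ^ 2) -
        trajExp p (k + 1) fun s => ‖θ (k + 1) s - v‖ ^ 2) +
      α k / 2 * trajExp p k fun s => unifMean (fun i => ‖∇ (f i) (θ k s)‖) ^ 2 := by
  rw [trajExp_succ, ← trajExp_sub, ← trajExp_const_mul, ← trajExp_const_mul, ← trajExp_add]
  refine trajExp_mono h.prob_nonneg fun s => ?_
  have hmin := h.isMinOn k s
  rw [h.prob_eq] at hmin ⊢
  exact unifMean_sub_unifMean_le_of_normProb_step hf (h.mem k s) hv
    (fun i => hdiff i _ (h.mem k s)) (hgrad _ (h.mem k s)) hα (fun i => h.mem _ _) hmin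

lemma sum_trajExp_regret_le (h : IsAdaptiveSGD Θ f α θ p) (hf : ∀ i, ConvexOn ℝ Θ (f i))
    (hdiff : ∀ i, ∀ x ∈ Θ, DifferentiableAt ℝ (f i) x) (hgrad : ∀ x ∈ Θ, ∃ i, ∇ (f i) x ≠ 0)
    (hα : ∀ k, 0 < α k) (hα_anti : Antitone α) {v : E} (hv : v ∈ Θ) {D : ℝ}
    (hD : ∀ x ∈ Θ, ‖x - v‖ ≤ D) (m : ℕ) :
    ∑ k ∈ Finset.range (m + 1),
        trajExp p k (fun s => unifMean (fun i => f i (θ k s)) - unifMean fun i => f i v) ≤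
      D ^ 2 / (2 * α m) + ∑ k ∈ Finset.range (m + 1),
        α k / 2 * trajExp p k fun s => unifMean (fun i => ‖∇ (f i) (θ k s)‖) ^ 2 := by
  set Δ : ℕ → ℝ := fun k => trajExp p k fun s => ‖θ k s - v‖ ^ 2
  have hΔ_nonneg (k : ℕ) : 0 ≤ Δ k :=
    (trajExp_const (h.sum_prob hgrad) 0).symm.trans_le
      (trajExp_mono h.prob_nonneg fun _ => sq_nonneg _)
  have hΔ_le (k : ℕ) : Δ k ≤ D ^ 2 :=
    (trajExp_mono h.prob_nonneg fun s => by gcongr; exact hD _ (h.mem k s)).trans_eq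
      (trajExp_const (h.sum_prob hgrad) _)
  have hmono : Monotone fun k => 1 / (2 * α k) := fun k l hkl =>
    one_div_le_one_div_of_le (by linarith [hα l]) (by linarith [hα_anti hkl])
  have hr_nonneg (k : ℕ) : 0 ≤ 1 / (2 * α k) := by have := hα k; positivity
  calc _ ≤ ∑ k ∈ Finset.range (m + 1), (1 / (2 * α k) * (Δ k - Δ (k + 1)) +
        α k / 2 * trajExp p k fun s => unifMean (fun i => ‖∇ (f i) (θ k s)‖) ^ 2) :=
        Finset.sum_le_sum fun k _ => h.trajExp_regret_le hf hdiff hgrad k (hα k) hv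
    _ ≤ _ := by
        rw [Finset.sum_add_distrib, div_eq_mul_one_div, mul_comm (D ^ 2)]
        gcongr
        calc _ ≤ 1 / (2 * α m) * (D ^ 2 - Δ (m + 1)) :=
              sum_range_succ_mul_sub_succ_le hmono (hr_nonneg 0) hΔ_le m
          _ ≤ 1 / (2 * α m) * D ^ 2 :=
              mul_le_mul_of_nonneg_left (sub_le_self _ (hΔ_nonneg _)) (hr_nonneg m)

lemma trajExp_sq_unifMean_norm_gradient_le (h : IsAdaptiveSGD Θ f α θ p)
    (hgrad : ∀ x ∈ Θ, ∃ i, ∇ (f i) x ≠ 0) {G : ℝ} (hG : ∀ i, ∀ x ∈ Θ, ‖∇ (f i) x‖ ≤ G) (k : ℕ) :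
    trajExp p k (fun s => unifMean (fun i => ‖∇ (f i) (θ k s)‖) ^ 2) ≤
      G ^ 2 - trajExp p k fun s => unifVar fun i => ‖∇ (f i) (θ k s)‖ := by
  rw [← trajExp_const (h.sum_prob hgrad) (G ^ 2), ← trajExp_sub]
  exact trajExp_mono h.prob_nonneg fun s => sq_unifMean_le fun i => by
    simpa only [abs_norm] using hG i _ (h.mem k s)

end IsAdaptiveSGD

theorem stmt_11_general {T : ℕ} (hT : 1 ≤ T) {Θ : Set E} {f : Fin n → E → ℝ}
    (hf : ∀ i, ConvexOn ℝ Θ (f i)) (hdiff : ∀ i, ∀ x ∈ Θ, DifferentiableAt ℝ (f i) x)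
    (hgrad : ∀ x ∈ Θ, ∃ i, ∇ (f i) x ≠ 0) {D G : ℝ} (hG : ∀ i, ∀ x ∈ Θ, ‖∇ (f i) x‖ ≤ G)
    {θ : (t : ℕ) → (Fin t → Fin n) → E} {p : (t : ℕ) → (Fin t → Fin n) → Fin n → ℝ}
    (h : IsAdaptiveSGD Θ f (fun t => 1 / √((t : ℝ) + 1)) θ p)
    {v : E} (hv : v ∈ Θ) (hD : ∀ x ∈ Θ, ‖x - v‖ ≤ D) :
    ∑ k ∈ Finset.range T,
        trajExp p k (fun s => unifMean (fun i => f i (θ k s)) - unifMean fun i => f i v) ≤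
      G ^ 2 * (√T - 1 / 2) -
      (∑ k ∈ Finset.range T, 1 / (2 * √((k : ℝ) + 1)) *
        trajExp p k fun s => unifVar fun i => ‖∇ (f i) (θ k s)‖) +
      D ^ 2 / 2 * √T := by
  obtain ⟨m, rfl⟩ := Nat.exists_eq_add_of_le' hT
  have hanti : Antitone fun t : ℕ => 1 / √((t : ℝ) + 1) := fun s t hst => by
    dsimp only
    gcongr
  have hregret := h.sum_trajExp_regret_le hf hdiff hgrad (fun k => by positivity) hanti hv hD m
  have hdist : D ^ 2 / (2 * (1 / √((m : ℝ) + 1))) = D ^ 2 / 2 * √((m + 1 : ℕ) : ℝ) := by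
    push_cast
    field_simp
  have hvar : ∑ k ∈ Finset.range (m + 1), 1 / √((k : ℝ) + 1) / 2 *
        trajExp p k (fun s => unifMean (fun i => ‖∇ (f i) (θ k s)‖) ^ 2) ≤
      ∑ k ∈ Finset.range (m + 1), 1 / (2 * √((k : ℝ) + 1)) *
        (G ^ 2 - trajExp p k fun s => unifVar fun i => ‖∇ (f i) (θ k s)‖) := by
    simp only [div_div, mul_comm _ (2 : ℝ)]
    gcongr with k
    exact h.trajExp_sq_unifMean_norm_gradient_le hgrad hG k
  simp only [mul_sub, Finset.sum_sub_distrib, ← Finset.sum_mul] at hvar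
  have hsteps := mul_le_mul_of_nonneg_left (sum_range_one_div_two_mul_sqrt_le hT) (sq_nonneg G)
  linarith

end AdaptiveSGD

/-- Corollary 2.1 of the paper: expected regret of adaptive-probabilities SGD
with step sizes `α_t = 1/√t` and optimal probabilities `p̂_t(i) ∝ ‖∇f_i(θ_t)‖₂`:
`Σ_t E[f(θ_t) − f(θ*)] ≤ d G²(√T − 1/2) − Σ_t (1/(2√t)) E[Var_n(‖∇f_i(θ_t)‖₂)] + (d D²/2)√T`.
Here `θpath t s` is the iterate `θ_{t+1}` produced by the history `s = (i₁,…,i_t)`. -/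
theorem stmt_11 (d n : ℕ) (hn : 0 < n) (T : ℕ) (hT : 1 ≤ T)
    (Θ : Set (EuclideanSpace ℝ (Fin d))) (hΘconv : Convex ℝ Θ)
    (f : Fin n → EuclideanSpace ℝ (Fin d) → ℝ)
    (hconv : ∀ i, ConvexOn ℝ Set.univ (f i))
    (hdiff : ∀ i, Differentiable ℝ (f i))
    (D G : ℝ)
    (hD : ∀ θ ∈ Θ, ∀ θ' ∈ Θ, ∀ h : Fin d, |θ h - θ' h| ≤ D)
    (hgradne : ∀ (i : Fin n), ∀ θ ∈ Θ, gradient (f i) θ ≠ 0)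
    (hG : ∀ (i : Fin n), ∀ θ ∈ Θ, ∀ h : Fin d, |gradient (f i) θ h| ≤ G)
    (θ₁ : EuclideanSpace ℝ (Fin d)) (hθ₁ : θ₁ ∈ Θ)
    (θpath : (t : ℕ) → (Fin t → Fin n) → EuclideanSpace ℝ (Fin d))
    (hinit : ∀ s : Fin 0 → Fin n, θpath 0 s = θ₁)
    (hmem : ∀ t s, θpath t s ∈ Θ)
    -- optimal sampling probabilities, proportional to the gradient norms at the current iterate
    (phat : (t : ℕ) → (Fin t → Fin n) → Fin n → ℝ)
    (hphat : ∀ t s i, phat t s i =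
      ‖gradient (f i) (θpath t s)‖ / ∑ j, ‖gradient (f j) (θpath t s)‖)
    (what : (t : ℕ) → (Fin t → Fin n) → Fin n → ℝ)
    (hwhat : ∀ t s i, what t s i = 1 / ((n : ℝ) * phat t s i))
    (hproj : ∀ (t : ℕ) (s : Fin t → Fin n) (i : Fin n), ∀ u ∈ Θ,
      ‖θpath (t + 1) (Fin.snoc s i) -
          (θpath t s - ((1 / Real.sqrt (t + 1)) * what t s i) • gradient (f i) (θpath t s))‖ ≤
        ‖u - (θpath t s - ((1 / Real.sqrt (t + 1)) * what t s i) • gradient (f i) (θpath t s))‖)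
    (θstar : EuclideanSpace ℝ (Fin d)) (hθstar : θstar ∈ Θ) :
    -- regret: t ranges over 1..T, encoded as t = k+1 with k ∈ range T, and θ_t = θpath k
    ∑ k ∈ Finset.range T, ∑ s : Fin k → Fin n, trajProb phat k s *
        ((1 / (n : ℝ)) * ∑ i, f i (θpath k s) - (1 / (n : ℝ)) * ∑ i, f i θstar) ≤
      (d : ℝ) * G ^ 2 * (Real.sqrt T - 1 / 2) -
      (∑ k ∈ Finset.range T, (1 / (2 * Real.sqrt (k + 1))) *
        ∑ s : Fin k → Fin n, trajProb phat k s *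
          ((1 / (n : ℝ)) * ∑ i,
            (‖gradient (f i) (θpath k s)‖ -
              (1 / (n : ℝ)) * ∑ j, ‖gradient (f j) (θpath k s)‖) ^ 2)) +
      ((d : ℝ) * D ^ 2 / 2) * Real.sqrt T := by
  have hrun : IsAdaptiveSGD Θ f (fun t => 1 / √((t : ℝ) + 1)) θpath phat :=
    ⟨hmem, fun t s => funext (hphat t s), fun t s i => isMinOn_iff.2 (hwhat t s i ▸ hproj t s i)⟩
  have hregret := stmt_11_general hT (fun i => (hconv i).subset (Set.subset_univ Θ) hΘconv)
    (fun i x _ => hdiff i x) (fun x hx => ⟨⟨0, hn⟩, hgradne _ x hx⟩)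
    (fun i x hx => euclideanSpace_norm_le_sqrt_card_mul (hG i x hx)) hrun hθstar
    (fun x hx => euclideanSpace_norm_le_sqrt_card_mul (hD x hx θstar hθstar))
  simpa only [trajExp, unifVar, unifMean, mul_pow, sq_abs, Fintype.card_fin,
    Real.sq_sqrt d.cast_nonneg] using hregret
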